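/- Every non-abelian right angled Artin group G(Γ) admits a surjective homomorphism onto the free group F₂ of rank 2. Consequently, for every proper word w, the set w[G(Γ)] is not rational in G(Γ). -/

import Mathlib

open Pointwise

/-- The verbal set `w[G]`: all values of the word `w` in `G`. -/
def verbalSet (w : FreeGroup ℕ) (G : Type*) [Group G] : Set G :=
  {g | ∃ φ : FreeGroup ℕ →* G, φ w = g}

/-- Exponent sums of a word in the generators, as a finitely supported function. -/
noncomputable def expSum (w : FreeGroup ℕ) : ℕ →₀ ℤ :=
  Multiplicative.toAdd
    ((FreeGroup.lift fun i => Multiplicative.ofAdd (Finsupp.single i (1 : ℤ))) w)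

/-- `e(w)`: the gcd of the exponent sums of the generators in `w` (0 if all are 0). -/
noncomputable def eWord (w : FreeGroup ℕ) : ℕ :=
  (expSum w).support.gcd fun i => ((expSum w) i).natAbs

/-- A word is proper if `w[G] ≠ {1}` and `w[H] ≠ H` for some groups `G`, `H`. -/
def IsProperWord (w : FreeGroup ℕ) : Prop :=
  ∃ (G : Type) (_ : Group G) (H : Type) (_ : Group H),
    verbalSet w G ≠ {1} ∧ verbalSet w H ≠ Set.univ

/-- Rational subsets of a monoid: the smallest family containing the finite sets and
closed under union, product and submonoid generation (Kleene star). -/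
inductive IsRational {M : Type*} [Monoid M] : Set M → Prop
  | finite (s : Set M) (h : s.Finite) : IsRational s
  | union {s t : Set M} : IsRational s → IsRational t → IsRational (s ∪ t)
  | mul {s t : Set M} : IsRational s → IsRational t → IsRational (s * t)
  | star {s : Set M} : IsRational s → IsRational (Submonoid.closure s : Set M)
/-- The defining relations of the right angled Artin group on a graph `Γ`. -/
def raagRels {V : Type*} (Γ : SimpleGraph V) : Set (FreeGroup V) :=
  {r | ∃ u v : V, Γ.Adj u v ∧
    r = FreeGroup.of u * FreeGroup.of v * (FreeGroup.of u)⁻¹ * (FreeGroup.of v)⁻¹}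

/-- The right angled Artin group on a finite graph `Γ`. -/
def RAAG {V : Type*} (Γ : SimpleGraph V) : Type _ := PresentedGroup (raagRels Γ)

instance {V : Type*} (Γ : SimpleGraph V) : Group (RAAG Γ) := by
  unfold RAAG; infer_instance

namespace IsRational

/-- Rational sets are preserved by monoid homomorphisms. -/
theorem image {M N : Type*} [Monoid M] [Monoid N] (f : M →* N) {s : Set M}
    (hs : IsRational s) : IsRational (f '' s) := by
  induction hs with
  | finite s h => exact .finite _ (h.image f)
  | union _ _ ihs iht => rw [Set.image_union]; exact ihs.union iht
  | mul _ _ ihs iht => rw [Set.image_mul]; exact ihs.mul iht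
  | star _ ih =>
    rw [← Submonoid.coe_map, MonoidHom.map_mclosure]
    exact ih.star

end IsRational

/-- A surjective homomorphism maps verbal sets onto verbal sets. -/
theorem image_verbalSet {G H : Type*} [Group G] [Group H] (f : G →* H)
    (hf : Function.Surjective f) (w : FreeGroup ℕ) :
    f '' verbalSet w G = verbalSet w H := by
  ext h
  constructor
  · rintro ⟨_, ⟨φ, rfl⟩, rfl⟩
    exact ⟨f.comp φ, rfl⟩
  · rintro ⟨ψ, rfl⟩
    choose g hg using hf
    refine ⟨_, ⟨FreeGroup.lift fun i => g (ψ (.of i)), rfl⟩, ?_⟩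
    rw [← MonoidHom.comp_apply]
    congr 1
    ext i
    simp [hg]

namespace FreeGroup

variable {α : Type*}

theorem _root_.List.IsPrefix.of_append {β : Type*} {P L M : List β} (h : P <+: L ++ M) :
    P <+: L ∨ ∃ Q, Q <+: M ∧ P = L ++ Q := by
  rcases List.prefix_or_prefix_of_prefix h (List.prefix_append L M) with h' | ⟨Q, rfl⟩
  · exact .inl h'
  · exact .inr ⟨Q, (List.prefix_append_right_inj L).mp h, rfl⟩

/-- Every path from `1` to `g` in the Cayley graph of the free group visits `t`. -/
def OnPath (t g : FreeGroup α) : Prop :=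
  ∀ L, mk L = g → ∃ P, P <+: L ∧ mk P = t

theorem OnPath.mul {t g h : FreeGroup α} (ht : OnPath t (g * h)) :
    OnPath t g ∨ OnPath (g⁻¹ * t) h := by
  by_contra! hcon
  simp only [OnPath, not_forall] at hcon
  obtain ⟨⟨L, hL, hLt⟩, M, hM, hMt⟩ := hcon
  obtain ⟨P, hP, rfl⟩ := ht (L ++ M) (by rw [← mul_mk, hL, hM])
  rcases hP.of_append with h | ⟨Q, hQ, rfl⟩
  · exact hLt ⟨P, h, rfl⟩
  · exact hMt ⟨Q, hQ, by rw [← mul_mk, hL]; group⟩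

theorem OnPath.eq_one {t : FreeGroup α} (ht : OnPath t 1) : t = 1 := by
  obtain ⟨P, hP, rfl⟩ := ht [] rfl
  rw [List.prefix_nil.mp hP]; rfl

theorem Red.exists_prefix {L M : List (α × Bool)} (h : Red L M) {P : List (α × Bool)}
    (hP : P <+: M) : ∃ Q, Q <+: L ∧ mk Q = mk P := by
  induction h using Relation.ReflTransGen.head_induction_on with
  | refl => exact ⟨P, hP, rfl⟩
  | head hs _ ih =>
    obtain ⟨Q, hQ, hQP⟩ := ih
    cases hs with
    | @not A B x b =>
      rcases hQ.of_append with h | ⟨C, hC, rfl⟩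
      · exact ⟨Q, h.trans (List.prefix_append _ _), hQP⟩
      · refine ⟨A ++ (x, b) :: (x, !b) :: C, ?_, ?_⟩
        · simpa using hC
        · rw [← hQP]
          exact Quot.sound Red.Step.not

theorem onPath_mk_append [DecidableEq α] {A B : List (α × Bool)} (h : IsReduced (A ++ B)) :
    OnPath (mk A) (mk (A ++ B)) := by
  intro L hL
  have h1 : Red L (A ++ B) := by
    rw [← h.reduce_eq, ← reduce.sound hL]
    exact reduce.red
  exact h1.exists_prefix (List.prefix_append _ _)

/-- A rational subset of a free group has finitely many residuals along geodesics. -/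
theorem _root_.IsRational.exists_residuals [DecidableEq α] {R : Set (FreeGroup α)}
    (hR : IsRational R) :
    ∃ F : Set (Set (FreeGroup α)), F.Finite ∧ ∀ g ∈ R, ∀ t, OnPath t g →
      ∃ S ∈ F, (∀ s ∈ S, t * s ∈ R) ∧ t⁻¹ * g ∈ S := by
  induction hR with
  | finite s h =>
    refine ⟨⋃ g ∈ s, (fun P => {(mk P)⁻¹ * g}) '' {P | P ∈ g.toWord.inits},
      h.biUnion fun g _ => (List.finite_toSet _).image _, ?_⟩
    intro g hg t ht
    obtain ⟨P, hP, rfl⟩ := ht g.toWord mk_toWord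
    refine ⟨{(mk P)⁻¹ * g}, Set.mem_biUnion hg ⟨P, by simpa using hP, rfl⟩, ?_, rfl⟩
    rintro _ rfl
    rwa [mul_inv_cancel_left]
  | @union s t _ _ ihs iht =>
    obtain ⟨F, hF, hs⟩ := ihs
    obtain ⟨F', hF', ht⟩ := iht
    refine ⟨F ∪ F', hF.union hF', ?_⟩
    rintro g (hg | hg) u hu
    · obtain ⟨S, hS, h1, h2⟩ := hs g hg u hu
      exact ⟨S, .inl hS, fun x hx => .inl (h1 x hx), h2⟩
    · obtain ⟨S, hS, h1, h2⟩ := ht g hg u hu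
      exact ⟨S, .inr hS, fun x hx => .inr (h1 x hx), h2⟩
  | @mul s t _ _ ihs iht =>
    obtain ⟨F, hF, hs⟩ := ihs
    obtain ⟨F', hF', ht⟩ := iht
    refine ⟨(· * t) '' F ∪ F', (hF.image _).union hF', ?_⟩
    rintro _ ⟨g, hg, h, hh, rfl⟩ u hu
    rcases OnPath.mul hu with hu | hu
    · obtain ⟨S, hS, h1, h2⟩ := hs g hg u hu
      refine ⟨S * t, .inl ⟨S, hS, rfl⟩, ?_, ?_⟩
      · rintro _ ⟨a, ha, b, hb, rfl⟩
        exact ⟨u * a, h1 a ha, b, hb, mul_assoc _ _ _⟩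
      · exact ⟨u⁻¹ * g, h2, h, hh, mul_assoc _ _ _⟩
    · obtain ⟨S, hS, h1, h2⟩ := ht h hh _ hu
      refine ⟨S, .inr hS, fun x hx => ⟨g, hg, _, h1 x hx, ?_⟩, ?_⟩
      · simp [mul_assoc]
      · simpa [mul_assoc] using h2
  | @star s _ ih =>
    obtain ⟨F, hF, hs⟩ := ih
    refine ⟨insert {1} ((· * (Submonoid.closure s : Set (FreeGroup α))) '' F),
      (hF.image _).insert _, ?_⟩
    intro g hg
    induction hg using Submonoid.closure_induction_left with
    | one =>
      intro t ht
      obtain rfl := ht.eq_one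
      exact ⟨{1}, .inl rfl, by simp, by simp⟩
    | mul_left g hg h hh ih =>
      intro u hu
      rcases OnPath.mul hu with hu | hu
      · obtain ⟨S, hS, h1, h2⟩ := hs g hg u hu
        refine ⟨S * (Submonoid.closure s : Set (FreeGroup α)), .inr ⟨S, hS, rfl⟩, ?_, ?_⟩
        · rintro _ ⟨a, ha, b, hb, rfl⟩
          simp only [← mul_assoc]
          exact mul_mem (Submonoid.subset_closure (h1 a ha)) hb
        · exact ⟨u⁻¹ * g, h2, h, hh, mul_assoc _ _ _⟩
      · obtain ⟨S, hS, h1, h2⟩ := ih _ hu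
        refine ⟨S, hS, fun x hx => ?_, by simpa [mul_assoc] using h2⟩
        have := mul_mem (Submonoid.subset_closure hg) (h1 x hx)
        simpa [mul_assoc] using this

theorem IsReduced.append_cons_cons {A B : List (α × Bool)} {y : α × Bool}
    (h : IsReduced (A ++ y :: B)) : IsReduced (A ++ y :: y :: B) := by
  simp only [IsReduced, List.isChain_append, List.isChain_cons, List.head?_cons,
    Option.mem_some_iff, forall_eq'] at h ⊢
  simp_all

theorem IsReduced.append_replicate {A B : List (α × Bool)} {y : α × Bool} {m : ℕ}
    (h : IsReduced (A ++ List.replicate (m + 1) y ++ B)) (d : ℕ) :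
    IsReduced (A ++ List.replicate (m + 1 + d) y ++ B) := by
  induction d with
  | zero => exact h
  | succ d ih =>
    rw [show m + 1 + (d + 1) = m + d + 1 + 1 by omega, List.replicate_succ, List.replicate_succ]
    rw [show m + 1 + d = m + d + 1 by omega, List.replicate_succ] at ih
    simpa using IsReduced.append_cons_cons (by simpa using ih)

/-- Pumping a power of a letter in an element of a rational subset of a free group. -/
theorem _root_.IsRational.exists_pump [DecidableEq α] {R : Set (FreeGroup α)}
    (hR : IsRational R) :
    ∃ n : ℕ, ∀ m, n ≤ m → ∀ (A B : List (α × Bool)) (y : α × Bool) (b : ℕ),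
      IsReduced (A ++ List.replicate (m + 1) y ++ B) →
      mk (A ++ List.replicate (m + 1) y ++ B) ∈ R →
      ∃ k, b ≤ k ∧ n ≤ k ∧ IsReduced (A ++ List.replicate (k + 1) y ++ B) ∧
        mk (A ++ List.replicate (k + 1) y ++ B) ∈ R := by
  obtain ⟨F, hF, hres⟩ := hR.exists_residuals
  refine ⟨hF.toFinset.card, fun m hm A B y b hred hmem => ?_⟩
  have pump : ∀ m, hF.toFinset.card ≤ m → IsReduced (A ++ List.replicate (m + 1) y ++ B) →
      mk (A ++ List.replicate (m + 1) y ++ B) ∈ R →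
      ∃ k, m < k ∧ IsReduced (A ++ List.replicate (k + 1) y ++ B) ∧
        mk (A ++ List.replicate (k + 1) y ++ B) ∈ R := by
    intro m hm hred hmem
    have hpath : ∀ i ∈ Finset.range (m + 1), ∃ S ∈ hF.toFinset,
        (∀ s ∈ S, mk (A ++ List.replicate i y) * s ∈ R) ∧
        mk (List.replicate (m + 1 - i) y ++ B) ∈ S := by
      intro i hi
      rw [Finset.mem_range] at hi
      have hsplit : A ++ List.replicate (m + 1) y ++ B =
          (A ++ List.replicate i y) ++ (List.replicate (m + 1 - i) y ++ B) := by
        rw [show m + 1 = i + (m + 1 - i) by omega, List.replicate_add]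
        simp only [List.append_assoc, add_tsub_cancel_left]
      obtain ⟨S, hS, h1, h2⟩ := hres _ hmem (mk (A ++ List.replicate i y))
        (hsplit ▸ onPath_mk_append (hsplit ▸ hred))
      refine ⟨S, by simpa using hS, h1, ?_⟩
      rw [hsplit, ← mul_mk (L₁ := A ++ _), inv_mul_cancel_left] at h2
      exact h2
    choose! S hSF hSR hSm using hpath
    obtain ⟨i, hi, j, hj, hij, hSij⟩ := Finset.exists_ne_map_eq_of_card_lt_of_maps_to
      (s := Finset.range (m + 1)) (t := hF.toFinset) (by simpa using by omega)
      (f := S) (fun i hi => hSF i hi)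
    wlog hlt : i < j generalizing i j
    · exact this j hj i hi hij.symm hSij.symm (by omega)
    rw [Finset.mem_range] at hi hj
    refine ⟨m + (j - i), by omega, ?_, ?_⟩
    · rw [show m + (j - i) + 1 = m + 1 + (j - i) by omega]
      exact hred.append_replicate _
    · have := hSR j (by simpa using hj) _ (hSij ▸ hSm i (by simpa using hi))
      rw [mul_mk] at this
      rw [show m + (j - i) + 1 = j + (m + 1 - i) by omega, List.replicate_add]
      simpa only [List.append_assoc] using this
  induction b with
  | zero => exact ⟨m, Nat.zero_le _, hm, hred, hmem⟩
  | succ b ih =>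
    obtain ⟨k, hbk, hnk, h1, h2⟩ := ih
    obtain ⟨l, hl, h3, h4⟩ := pump k hnk h1 h2
    exact ⟨l, by omega, by omega, h3, h4⟩

end FreeGroup

theorem Finsupp.card_support_add_le {ι M : Type*} [AddZeroClass M] (a b : ι →₀ M) :
    (a + b).support.card ≤ a.support.card + b.support.card := by
  classical
  exact (Finset.card_le_card Finsupp.support_add).trans (Finset.card_union_le _ _)

theorem Finsupp.card_support_sub_le {ι M : Type*} [AddGroup M] (a b : ι →₀ M) :
    (a - b).support.card ≤ a.support.card + b.support.card := by
  rw [sub_eq_add_neg]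
  simpa using Finsupp.card_support_add_le a (-b)

namespace FreeGroup

/-- The state of a scan of a word in `x`, `y`: `some j` after reading `x y ^ j`. -/
def scanStep (s : Option ℕ) (a : Fin 2 × Bool) : Option ℕ :=
  if a = (0, true) then some 0 else if a = (1, true) then s.map (· + 1) else none

/-- The number of occurrences of `x y ^ j x` in a word, as a function of `j`, where the scan
starts in the state `s`. -/
noncomputable def patternCount : Option ℕ → List (Fin 2 × Bool) → ℕ →₀ ℤ
  | _, [] => 0
  | s, a :: L => (if a = (0, true) then s.elim 0 (Finsupp.single · 1) else 0) +
      patternCount (scanStep s a) L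

theorem patternCount_append (s : Option ℕ) (A B : List (Fin 2 × Bool)) :
    patternCount s (A ++ B) = patternCount s A + patternCount (A.foldl scanStep s) B := by
  induction A generalizing s with
  | nil => simp [patternCount]
  | cons a A ih => simp [patternCount, ih, add_assoc]

theorem card_patternCount_sub_le (s : Option ℕ) (B : List (Fin 2 × Bool)) :
    (patternCount s B - patternCount none B).support.card ≤ 1 := by
  induction B generalizing s with
  | nil => simp [patternCount]
  | cons a B ih =>
    by_cases h0 : a = (0, true)
    · cases s with
      | none => simp
      | some j => simp [patternCount, scanStep, h0]
    · by_cases h1 : a = (1, true)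
      · simpa [patternCount, scanStep, h1] using ih (s.map (· + 1))
      · simp [patternCount, scanStep, h0, h1]

theorem card_patternCount_append_le (A B : List (Fin 2 × Bool)) :
    (patternCount none (A ++ B) - patternCount none A - patternCount none B).support.card ≤ 1 := by
  rw [patternCount_append, add_sub_cancel_left]
  exact card_patternCount_sub_le _ _

/-- The antisymmetrised number of occurrences of `x y ^ j x` in the reduced form of `g`. -/
noncomputable def patternFun (g : FreeGroup (Fin 2)) : ℕ →₀ ℤ :=
  patternCount none g.toWord - patternCount none (g⁻¹).toWord

theorem patternFun_one : patternFun 1 = 0 := by simp [patternFun]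

theorem patternFun_inv (g : FreeGroup (Fin 2)) : patternFun g⁻¹ = -patternFun g := by
  simp [patternFun]

theorem patternFun_mk {L : List (Fin 2 × Bool)} (h : IsReduced L) :
    patternFun (mk L) = patternCount none L - patternCount none (invRev L) := by
  rw [patternFun, toWord_inv, toWord_mk, h.reduce_eq]

theorem exists_cancellation {α : Type*} (L M : List (α × Bool)) (hL : IsReduced L)
    (hM : IsReduced M) : ∃ A B C, L = A ++ C ∧ M = invRev C ++ B ∧ IsReduced (A ++ B) := by
  induction L using List.reverseRecOn generalizing M with
  | nil => exact ⟨[], M, [], by simp, by simp, by simpa⟩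
  | append_singleton L a ih =>
    cases M with
    | nil => exact ⟨L ++ [a], [], [], by simp, by simp, by simpa⟩
    | cons b M =>
      by_cases hab : a.1 = b.1 → a.2 = b.2
      · refine ⟨L ++ [a], b :: M, [], by simp, by simp, ?_⟩
        rw [IsReduced, List.isChain_append]
        exact ⟨hL, hM, by simpa using hab⟩
      · rw [IsReduced, List.isChain_append] at hL
        obtain ⟨A, B, C, rfl, rfl, h⟩ := ih M hL.1 (List.IsChain.tail hM)
        refine ⟨A, B, C ++ [a], by simp, ?_, h⟩
        obtain ⟨i, s⟩ := a
        obtain ⟨j, t⟩ := b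
        have : i = j ∧ t = !s := by cases s <;> cases t <;> simp_all
        simp [invRev, this]

theorem card_patternFun_mul_le (g h : FreeGroup (Fin 2)) :
    (patternFun (g * h) - patternFun g - patternFun h).support.card ≤ 6 := by
  obtain ⟨A, B, C, hg, hh, hred⟩ := exists_cancellation g.toWord h.toWord isReduced_toWord
    isReduced_toWord
  have hmul : g * h = mk (A ++ B) := by
    rw [← mk_toWord (x := g), ← mk_toWord (x := h), hg, hh, mul_mk]
    rw [← mul_mk, ← mul_mk, ← mul_mk, ← mul_mk, ← inv_mk]
    group
  have e : patternFun (g * h) - patternFun g - patternFun h =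
      (patternCount none (A ++ B) - patternCount none A - patternCount none B)
      - (patternCount none (invRev B ++ invRev A) - patternCount none (invRev B)
        - patternCount none (invRev A))
      - (patternCount none (A ++ C) - patternCount none A - patternCount none C)
      + (patternCount none (invRev C ++ invRev A) - patternCount none (invRev C)
        - patternCount none (invRev A))
      - (patternCount none (invRev C ++ B) - patternCount none (invRev C) - patternCount none B)
      + (patternCount none (invRev B ++ C) - patternCount none (invRev B)
        - patternCount none C) := by
    rw [hmul, patternFun_mk hred, patternFun, patternFun, toWord_inv, toWord_inv, hg, hh]
    simp only [invRev_append, invRev_invRev]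
    abel
  rw [e]
  refine (Finsupp.card_support_add_le _ _).trans (add_le_add (b := 5) ?_
    (card_patternCount_append_le _ _))
  refine (Finsupp.card_support_sub_le _ _).trans (add_le_add (b := 4) ?_
    (card_patternCount_append_le _ _))
  refine (Finsupp.card_support_add_le _ _).trans (add_le_add (b := 3) ?_
    (card_patternCount_append_le _ _))
  refine (Finsupp.card_support_sub_le _ _).trans (add_le_add (b := 2) ?_
    (card_patternCount_append_le _ _))
  exact (Finsupp.card_support_sub_le _ _).trans (add_le_add (b := 1)
    (card_patternCount_append_le _ _) (card_patternCount_append_le _ _))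

end FreeGroup

theorem expSum_mul (v w : FreeGroup ℕ) : expSum (v * w) = expSum v + expSum w := by
  simp [expSum]

theorem expSum_inv (w : FreeGroup ℕ) : expSum w⁻¹ = -expSum w := by
  simp [expSum]

theorem expSum_of (i : ℕ) : expSum (FreeGroup.of i) = Finsupp.single i 1 := by
  simp [expSum]

/-- Up to boundedly many patterns, the pattern counts of a value of `w` only depend on the
exponent sums of `w`. -/
theorem exists_card_patternFun_le (w : FreeGroup ℕ) :
    ∃ C, ∀ φ : FreeGroup ℕ →* FreeGroup (Fin 2),
      ((φ w).patternFun -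
        (expSum w).sum fun i n => n • (φ (.of i)).patternFun).support.card ≤ C := by
  induction w using FreeGroup.induction_on with
  | C1 => exact ⟨0, fun φ => by simp [expSum, FreeGroup.patternFun_one]⟩
  | of i => exact ⟨0, fun φ => by simp [expSum_of]⟩
  | inv_of i _ => exact ⟨0, fun φ => by
      rw [expSum_inv, expSum_of, ← Finsupp.single_neg, Finsupp.sum_single_index (by simp)]
      simp [FreeGroup.patternFun_inv]⟩
  | mul v w hv hw =>
    obtain ⟨C, hC⟩ := hv
    obtain ⟨D, hD⟩ := hw
    refine ⟨6 + C + D, fun φ => ?_⟩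
    rw [expSum_mul, Finsupp.sum_add_index' (by simp) (by intros; rw [add_smul]), map_mul]
    set a := (expSum v).sum fun i n => n • (φ (.of i)).patternFun
    set b := (expSum w).sum fun i n => n • (φ (.of i)).patternFun
    rw [show (φ v * φ w).patternFun - (a + b) =
      ((φ v * φ w).patternFun - (φ v).patternFun - (φ w).patternFun) +
        ((φ v).patternFun - a) + ((φ w).patternFun - b) by abel]
    refine (Finsupp.card_support_add_le _ _).trans (add_le_add ?_ (hD φ))
    exact (Finsupp.card_support_add_le _ _).trans
      (add_le_add (FreeGroup.card_patternFun_mul_le _ _) (hC φ))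

/-- The exponent sums of a proper word have a common divisor other than `1`. -/
theorem IsProperWord.exists_dvd_expSum {w : FreeGroup ℕ} (hw : IsProperWord w) :
    ∃ q : ℤ, ¬ q ∣ 1 ∧ ∀ i, q ∣ expSum w i := by
  obtain ⟨-, -, H, _, -, hH⟩ := hw
  obtain ⟨q, hq⟩ := Int.subgroup_cyclic
    (Subgroup.toAddSubgroup' (MonoidHom.eval (N := Multiplicative ℤ) w).range)
  have hmem : ∀ n : ℤ, (∃ θ : FreeGroup ℕ →* Multiplicative ℤ, θ w = Multiplicative.ofAdd n) ↔
      q ∣ n := by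
    intro n
    rw [← Int.mem_zmultiples_iff, AddSubgroup.zmultiples_eq_closure, ← hq]
    rfl
  refine ⟨q, fun h1 => hH ?_, fun i => (hmem _).mp ?_⟩
  · obtain ⟨θ, hθ⟩ := (hmem 1).mpr h1
    refine Set.eq_univ_of_forall fun h => ⟨(zpowersHom H h).comp θ, ?_⟩
    simp [hθ]
  · exact ⟨(AddMonoidHom.toMultiplicative (Finsupp.applyAddHom i)).comp
      (FreeGroup.lift fun i => Multiplicative.ofAdd (Finsupp.single i (1 : ℤ))), rfl⟩

/-- The free group of countable rank embeds into the free group of rank two. -/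
theorem FreeGroup.exists_injective_hom :
    ∃ φ : FreeGroup ℕ →* FreeGroup (Fin 2), Function.Injective φ := by
  let σ : Multiplicative ℤ →* MulAut (FreeGroup ℤ) :=
    zpowersHom _ (freeGroupCongr (Equiv.addRight (1 : ℤ)))
  have hσ : ∀ n : ℕ, σ (Multiplicative.ofAdd (n : ℤ)) (of 0) = of (n : ℤ) := by
    intro n
    simp only [σ, zpowersHom_apply, toAdd_ofAdd, zpow_natCast]
    induction n with
    | zero => simp
    | succ n ih =>
      rw [pow_succ', MulAut.mul_apply, ih]
      simp
  let ψ : FreeGroup (Fin 2) →* FreeGroup ℤ ⋊[σ] Multiplicative ℤ :=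
    lift ![SemidirectProduct.inl (of 0), SemidirectProduct.inr (Multiplicative.ofAdd 1)]
  let φ : FreeGroup ℕ →* FreeGroup (Fin 2) := lift fun n => of 1 ^ n * of 0 * (of 1 ^ n)⁻¹
  have hcomp : ψ.comp φ = SemidirectProduct.inl.comp (map (Nat.cast : ℕ → ℤ)) := by
    ext1 n
    have hn : Multiplicative.ofAdd (n : ℤ) = Multiplicative.ofAdd 1 ^ n := by
      simp [← ofAdd_nsmul]
    simp only [MonoidHom.comp_apply, φ, ψ, lift_apply_of, map.of, ← hσ, SemidirectProduct.inl_aut]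
    simp [hn]
  refine ⟨φ, Function.Injective.of_comp (f := ψ) ?_⟩
  rw [← MonoidHom.coe_comp, hcomp, MonoidHom.coe_comp]
  exact SemidirectProduct.inl_injective.comp (map_injective Nat.cast_injective)

namespace FreeGroup

/-- The word `x y ^ (m₁ + 1) x y ^ (m₂ + 1) ⋯`. -/
def blockWord (ms : List ℕ) : List (Fin 2 × Bool) :=
  ms.flatMap fun m => (0, true) :: List.replicate (m + 1) (1, true)

theorem blockWord_cons (m : ℕ) (ms : List ℕ) :
    blockWord (m :: ms) = (0, true) :: List.replicate (m + 1) (1, true) ++ blockWord ms := rfl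

theorem isReduced_of_forall {α : Type*} {L : List (α × Bool)} (b : Bool)
    (h : ∀ a ∈ L, a.2 = b) : IsReduced L :=
  (List.pairwise_iff_forall_sublist.mpr fun hs _ => by
    have := hs.subset
    rw [h _ (this (by simp)), h _ (this (by simp))]).isChain

theorem snd_of_mem_blockWord {ms : List ℕ} {a : Fin 2 × Bool} (h : a ∈ blockWord ms) :
    a.2 = true := by
  simp only [blockWord, List.mem_flatMap, List.mem_cons, List.mem_replicate] at h
  obtain ⟨m, -, rfl | ⟨-, rfl⟩⟩ := h <;> rfl

theorem snd_of_mem_invRev_blockWord {ms : List ℕ} {a : Fin 2 × Bool}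
    (h : a ∈ invRev (blockWord ms)) : a.2 = false := by
  simp only [invRev, List.mem_reverse, List.mem_map] at h
  obtain ⟨b, hb, rfl⟩ := h
  simp [snd_of_mem_blockWord hb]

theorem fst_of_mem_getLast?_blockWord {ms : List ℕ} {a : Fin 2 × Bool}
    (h : a ∈ (blockWord ms).getLast?) : a.1 = 1 := by
  induction ms using List.reverseRecOn with
  | nil => simp [blockWord] at h
  | append_singleton ms m _ =>
    simp [blockWord, List.getLast?_append, List.getLast?_cons, List.getLast?_replicate] at h
    simp [← h]

theorem isReduced_conj_blockWord (ms : List ℕ) {L : List (Fin 2 × Bool)} (hL : IsReduced L)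
    (hne : L ≠ []) (hhead : ∀ a ∈ L.head?, a.1 = 0) (hlast : ∀ a ∈ L.getLast?, a.1 = 0) :
    IsReduced (blockWord ms ++ (L ++ invRev (blockWord ms))) := by
  rw [IsReduced, List.isChain_append, List.isChain_append]
  refine ⟨isReduced_of_forall true fun _ => snd_of_mem_blockWord, ⟨hL,
    isReduced_of_forall false fun _ => snd_of_mem_invRev_blockWord, ?_⟩, ?_⟩
  · intro a ha b hb hab
    simp only [invRev, List.head?_reverse, List.getLast?_map, Option.mem_def,
      Option.map_eq_some_iff] at hb
    obtain ⟨c, hc, rfl⟩ := hb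
    simp [hlast a ha, fst_of_mem_getLast?_blockWord hc] at hab
  · intro a ha b hb hab
    rw [List.head?_append_of_ne_nil _ hne] at hb
    simp [hhead b hb, fst_of_mem_getLast?_blockWord ha] at hab

theorem patternCount_replicate_append (j m : ℕ) (L : List (Fin 2 × Bool)) :
    patternCount (some j) (List.replicate m (1, true) ++ L) = patternCount (some (j + m)) L := by
  induction m generalizing j with
  | zero => simp
  | succ m ih =>
    rw [List.replicate_succ, List.cons_append, patternCount]
    simp [scanStep, ih, add_assoc, add_comm 1]

theorem patternCount_blockWord (j : ℕ) (ms : List ℕ) :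
    ∃ l, patternCount (some j) (blockWord ms) + Finsupp.single l 1 =
      Finsupp.single j 1 + (ms.map fun m => Finsupp.single (m + 1) (1 : ℤ)).sum := by
  induction ms generalizing j with
  | nil => exact ⟨j, by simp [blockWord, patternCount]⟩
  | cons m ms ih =>
    obtain ⟨l, hl⟩ := ih (m + 1)
    refine ⟨l, ?_⟩
    rw [blockWord_cons, List.cons_append, patternCount]
    simp [scanStep, patternCount_replicate_append, hl, add_assoc]

theorem card_patternCount_blockWord_le (ms : List ℕ) :
    (patternCount none (blockWord ms) -
      (ms.map fun m => Finsupp.single (m + 1) (1 : ℤ)).sum).support.card ≤ 1 := by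
  cases ms with
  | nil => simp [blockWord, patternCount]
  | cons m ms =>
    obtain ⟨l, hl⟩ := patternCount_blockWord (m + 1) ms
    rw [blockWord_cons, List.cons_append, patternCount]
    simp only [scanStep, if_true, patternCount_replicate_append, List.map_cons, List.sum_cons,
      ← hl, add_comm 0 (m + 1)]
    simp

theorem patternCount_eq_zero {L : List (Fin 2 × Bool)} (h : ∀ a ∈ L, a.2 = false)
    (s : Option ℕ) : patternCount s L = 0 := by
  induction L generalizing s with
  | nil => rfl
  | cons a L ih =>
    have ha : a ≠ (0, true) := by
      rintro rfl
      simpa using h _ (List.mem_cons_self)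
    simp [patternCount, ha, ih fun b hb => h b (List.mem_cons_of_mem _ hb)]

theorem card_patternFun_blockWord_le {ms : List ℕ} {T : List (Fin 2 × Bool)}
    (h : IsReduced (blockWord ms ++ T)) :
    ((mk (blockWord ms ++ T)).patternFun - (ms.map fun m => Finsupp.single (m + 1) (1 : ℤ)).sum -
      (patternCount none T - patternCount none (invRev T))).support.card ≤ 3 := by
  have h0 := patternCount_eq_zero (L := invRev (blockWord ms))
    (fun _ => snd_of_mem_invRev_blockWord) none
  rw [patternFun_mk h, invRev_append,
    show patternCount none (blockWord ms ++ T)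
      - patternCount none (invRev T ++ invRev (blockWord ms))
      - (ms.map fun m => Finsupp.single (m + 1) (1 : ℤ)).sum
      - (patternCount none T - patternCount none (invRev T)) =
      (patternCount none (blockWord ms ++ T) - patternCount none (blockWord ms)
        - patternCount none T)
      + (patternCount none (blockWord ms) -
        (ms.map fun m => Finsupp.single (m + 1) (1 : ℤ)).sum)
      - (patternCount none (invRev T ++ invRev (blockWord ms)) - patternCount none (invRev T)
        - patternCount none (invRev (blockWord ms))) by rw [h0]; abel]
  refine (Finsupp.card_support_sub_le _ _).trans (add_le_add (b := 2) ?_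
    (card_patternCount_append_le _ _))
  exact (Finsupp.card_support_add_le _ _).trans (add_le_add (b := 1)
    (card_patternCount_append_le _ _) (card_patternCount_blockWord_le _))

/-- The exponents of the blocks of an element of a rational set can be pumped to become
increasing and arbitrarily large. -/
theorem _root_.IsRational.exists_pump_blockWord {R : Set (FreeGroup (Fin 2))}
    (hR : IsRational R) :
    ∃ n : ℕ, ∀ ms : List ℕ, (∀ m ∈ ms, n ≤ m) → ∀ (A T : List (Fin 2 × Bool)) (b : ℕ),
      IsReduced (A ++ (blockWord ms ++ T)) → mk (A ++ (blockWord ms ++ T)) ∈ R →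
      ∃ ks : List ℕ, ks.length = ms.length ∧ ks.Nodup ∧ (∀ k ∈ ks, b ≤ k) ∧
        IsReduced (A ++ (blockWord ks ++ T)) ∧ mk (A ++ (blockWord ks ++ T)) ∈ R := by
  obtain ⟨n, hn⟩ := hR.exists_pump
  refine ⟨n, fun ms => ?_⟩
  induction ms with
  | nil => exact fun _ A T b hred hmem => ⟨[], by simp, by simp, by simp, hred, hmem⟩
  | cons m ms ih =>
    intro hms A T b hred hmem
    have split : ∀ (k : ℕ) (ks : List ℕ), A ++ (blockWord (k :: ks) ++ T) =
        (A ++ [(0, true)]) ++ List.replicate (k + 1) (1, true) ++ (blockWord ks ++ T) := by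
      intro k ks
      rw [blockWord_cons]
      simp only [List.append_assoc, List.cons_append, List.nil_append]
    rw [split] at hred hmem
    obtain ⟨k, hbk, -, hred, hmem⟩ := hn m (hms m (by simp)) _ _ _ b hred hmem
    obtain ⟨ks, hlen, hnd, hks, hred, hmem⟩ :=
      ih (fun a ha => hms a (List.mem_cons_of_mem _ ha)) _ T (k + 1) hred hmem
    refine ⟨k :: ks, by simp [hlen], List.nodup_cons.mpr ⟨fun h => ?_, hnd⟩, ?_, ?_, ?_⟩
    · exact absurd (hks k h) (by omega)
    · rintro a (_ | ⟨_, ha⟩)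
      · exact hbk
      · exact hbk.trans ((Nat.le_succ k).trans (hks a ha))
    · rw [split]; exact hred
    · rw [split]; exact hmem

/-- Every nontrivial element is conjugate to one whose reduced form begins and ends with a power
of the first generator. -/
theorem exists_conj_mk {g : FreeGroup (Fin 2)} (hg : g ≠ 1) :
    ∃ (c : FreeGroup (Fin 2)) (L : List (Fin 2 × Bool)), c * g * c⁻¹ = mk L ∧ IsReduced L ∧
      L ≠ [] ∧ (∀ a ∈ L.head?, a.1 = 0) ∧ (∀ a ∈ L.getLast?, a.1 = 0) := by
  have hne : g.toWord ≠ [] := by simpa using hg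
  have hred : IsReduced g.toWord := isReduced_toWord
  have hmk : mk g.toWord = g := mk_toWord
  generalize g.toWord = L at *
  set a := L.head hne with ha
  set b := L.getLast hne with hb
  have hhead : L.head? = some a := List.head?_eq_some_head hne
  have hlast : L.getLast? = some b := List.getLast?_eq_some_getLast hne
  by_cases hab : a.1 = 0 ∧ b.1 = 0
  · exact ⟨1, L, by simp [hmk], hred, hne, by simp [hhead, hab], by simp [hlast, hab]⟩
  obtain ⟨s, hs, hs'⟩ : ∃ s : Bool, (0 = a.1 → s = a.2) ∧ (b.1 = 0 → b.2 = !s) := by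
    by_cases h0 : a.1 = 0
    · exact ⟨a.2, fun _ => rfl, fun h => absurd ⟨h0, h⟩ hab⟩
    · exact ⟨!b.2, fun h => absurd h.symm h0, fun _ => by simp⟩
  refine ⟨mk [(0, s)], (0, s) :: (L ++ [(0, !s)]), ?_, ?_, by simp, by simp,
    by rw [← List.cons_append, List.getLast?_concat]; simp⟩
  · rw [← hmk, inv_mk, mul_mk, mul_mk]
    simp [invRev]
  · rw [IsReduced, List.isChain_cons, List.isChain_append]
    refine ⟨?_, hred, by simp, ?_⟩
    · rw [List.head?_append_of_ne_nil _ hne, hhead]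
      simpa using hs
    · rw [hlast]
      simpa using hs'

end FreeGroup

theorem conj_mem_verbalSet {G : Type*} [Group G] {w : FreeGroup ℕ} {g : G}
    (hg : g ∈ verbalSet w G) (c : G) : c * g * c⁻¹ ∈ verbalSet w G := by
  obtain ⟨φ, rfl⟩ := hg
  exact ⟨(MulAut.conj c).toMonoidHom.comp φ, by simp⟩

open FreeGroup in
/-- Proper verbal sets in the free group of rank two are not rational. -/
theorem IsProperWord.not_isRational_verbalSet {w : FreeGroup ℕ} (hw : IsProperWord w) :
    ¬ IsRational (verbalSet w (FreeGroup (Fin 2))) := by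
  intro hR
  obtain ⟨q, hq1, hq⟩ := hw.exists_dvd_expSum
  obtain ⟨C, hC⟩ := exists_card_patternFun_le w
  have hw1 : w ≠ 1 := by
    rintro rfl
    obtain ⟨G, _, -, -, hG, -⟩ := hw
    refine hG (Set.eq_singleton_iff_unique_mem.mpr ⟨⟨1, map_one _⟩, ?_⟩)
    rintro _ ⟨φ, rfl⟩
    exact map_one φ
  obtain ⟨ι, hι⟩ := FreeGroup.exists_injective_hom
  have hg : ι w ≠ 1 := by simpa using hι.ne hw1
  obtain ⟨c, L, hcL, hL, hne, hhead, hlast⟩ := exists_conj_mk hg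
  obtain ⟨n, hn⟩ := hR.exists_pump_blockWord
  set ms := List.replicate (C + 4) n with hms
  set T := L ++ invRev (blockWord ms) with hT
  have hmem : mk (blockWord ms ++ T) ∈ verbalSet w (FreeGroup (Fin 2)) := by
    rw [hT, ← mul_mk, ← mul_mk, ← inv_mk, ← hcL, ← mul_assoc]
    exact conj_mem_verbalSet (conj_mem_verbalSet ⟨ι, rfl⟩ _) _
  set E := patternCount none T - patternCount none (invRev T) with hE
  obtain ⟨ks, hlen, hnd, hks, hred, φ, hφ⟩ := hn ms (by simp [hms]) [] T (E.support.sup id)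
    (isReduced_conj_blockWord ms hL hne hhead hlast) hmem
  rw [List.nil_append] at hred hφ
  have h1 := card_patternFun_blockWord_le hred
  have h2 := hC φ
  rw [← hE, ← hφ] at h1
  set D := (ks.map fun m => Finsupp.single (m + 1) (1 : ℤ)).sum with hD
  set S := (expSum w).sum fun i n => n • (φ (.of i)).patternFun with hS
  have h3 : (D + E - S).support.card ≤ C + 3 := by
    rw [show D + E - S = ((φ w).patternFun - S) - ((φ w).patternFun - D - E) by abel]
    exact (Finsupp.card_support_sub_le _ _).trans (add_le_add h2 h1)
  have h4 : (ks.toFinset.image (· + 1)) ⊆ (D + E - S).support := by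
    intro j hj
    obtain ⟨k, hk, rfl⟩ := Finset.mem_image.mp hj
    have hDk : D (k + 1) = 1 := by
      rw [hD, ← List.sum_toFinset _ hnd, Finsupp.finsetSum_apply]
      simp [Finsupp.single_apply, List.mem_toFinset.mp hk]
    have hEk : E (k + 1) = 0 := by
      by_contra h
      have := Finset.le_sup (f := id) (Finsupp.mem_support_iff.mpr h)
      have := hks k (List.mem_toFinset.mp hk)
      simp only [id] at *
      omega
    have hSk : q ∣ S (k + 1) := by
      rw [hS, Finsupp.sum, Finsupp.finsetSum_apply]
      exact Finset.dvd_sum fun i _ => Dvd.dvd.mul_right (hq i) _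
    rw [Finsupp.mem_support_iff]
    intro h
    apply hq1
    rw [Finsupp.sub_apply, Finsupp.add_apply, hDk, hEk, add_zero, sub_eq_zero] at h
    rwa [h]
  have h5 := Finset.card_le_card h4
  rw [Finset.card_image_of_injective _ (add_left_injective 1), List.toFinset_card_of_nodup hnd,
    hlen, hms, List.length_replicate] at h5
  omega

/-- A non-abelian right angled Artin group surjects onto the free group of rank two. -/
theorem RAAG.exists_surjective_hom {V : Type*} (Γ : SimpleGraph V)
    (hna : ∃ a b : RAAG Γ, a * b ≠ b * a) :
    ∃ φ : RAAG Γ →* FreeGroup (Fin 2), Function.Surjective φ := by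
  classical
  have hnadj : ∃ u v, u ≠ v ∧ ¬ Γ.Adj u v := by
    by_contra! hcon
    obtain ⟨a, b, hab⟩ := hna
    have hgen : ∀ u v : V, Commute (PresentedGroup.of (rels := raagRels Γ) u)
        (PresentedGroup.of (rels := raagRels Γ) v) := by
      intro u v
      rcases eq_or_ne u v with rfl | huv
      · exact Commute.refl _
      · have := PresentedGroup.one_of_mem (rels := raagRels Γ) ⟨u, v, hcon u v huv, rfl⟩
        rw [← commutatorElement_eq_one_iff_commute, commutatorElement_def]
        exact this
    have hmul : ∀ x y : PresentedGroup (raagRels Γ), Commute x y := by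
      have htop := PresentedGroup.closure_range_of (raagRels Γ)
      have hcl : ∀ x ∈ Subgroup.closure (Set.range (PresentedGroup.of (rels := raagRels Γ))),
          ∀ y ∈ Subgroup.closure (Set.range (PresentedGroup.of (rels := raagRels Γ))),
          x * y = y * x := by
        intro x hx y hy
        have := Subgroup.isMulCommutative_closure
          (k := Set.range (PresentedGroup.of (rels := raagRels Γ)))
          (by rintro _ ⟨u, rfl⟩ _ ⟨v, rfl⟩; exact hgen u v)
        exact congrArg Subtype.val (this.is_comm.comm ⟨x, hx⟩ ⟨y, hy⟩)
      exact fun x y => hcl x (htop ▸ Subgroup.mem_top x) y (htop ▸ Subgroup.mem_top y)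
    exact hab (hmul a b)
  obtain ⟨u, v, huv, hadj⟩ := hnadj
  let f : V → FreeGroup (Fin 2) := fun z => if z = u then .of 0 else if z = v then .of 1 else 1
  have hf : ∀ r ∈ raagRels Γ, FreeGroup.lift f r = 1 := by
    rintro _ ⟨a, b, hab, rfl⟩
    have hba := hab.symm
    have hne := hab.ne
    simp only [map_mul, map_inv, FreeGroup.lift_apply_of, f]
    split_ifs <;> simp_all
  refine ⟨PresentedGroup.toGroup hf, MonoidHom.range_eq_top.mp (top_le_iff.mp ?_)⟩
  rw [← FreeGroup.closure_range_of, Subgroup.closure_le]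
  rintro _ ⟨i, rfl⟩
  fin_cases i
  · exact ⟨PresentedGroup.of u, (PresentedGroup.toGroup.of hf).trans (by simp [f])⟩
  · exact ⟨PresentedGroup.of v, (PresentedGroup.toGroup.of hf).trans (by simp [f, huv.symm])⟩

/-- A non-abelian right angled Artin group surjects onto `F₂`; consequently none of
its proper verbal sets is rational. -/
theorem stmt_18 {V : Type*} [Fintype V] (Γ : SimpleGraph V)
    (hna : ∃ a b : RAAG Γ, a * b ≠ b * a) :
    (∃ φ : RAAG Γ →* FreeGroup (Fin 2), Function.Surjective φ) ∧
      ∀ w : FreeGroup ℕ, IsProperWord w → ¬ IsRational (verbalSet w (RAAG Γ)) := by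
  obtain ⟨φ, hφ⟩ := RAAG.exists_surjective_hom Γ hna
  refine ⟨⟨φ, hφ⟩, fun w hw hR => hw.not_isRational_verbalSet ?_⟩
  rw [← image_verbalSet φ hφ]
  exact hR.image φ
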